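/- Let k ≥ 2 be an integer. For s ∈ ℂ with Re(s) > 0 and s ∉ {1, 1/k}, the series ∑_{n=1}^∞ [σ_{k−1−ks}^{(k−1)}(n)/n] ∫_1^∞ sin(2πnx) x^{−s−1} dx converges absolutely, the function H(s) := (1/2)ζ(ks) + ζ(ks − (k−1))/(s−1) + (s/π) ∑_{n=1}^∞ [σ_{k−1−ks}^{(k−1)}(n)/n] ∫_1^∞ sin(2πnx) x^{−s−1} dx is analytic on {s : Re(s) > 0} ∖ {1, 1/k}, and H(s) = ∑_{j=1}^∞ d^{(1/k)}(j) j^{−s} whenever Re(s) > 1. -/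

import Mathlib

/-!
Writing `j = d m`, the condition `d^k ≤ j` becomes `d^{k-1} ≤ m`, so for `Re s > 1`
`∑_j d^{(1/k)}(j) j^{-s} = ∑_d d^{-s} ∑_{m ≥ d^{k-1}} m^{-s}` (`tsum_wigertD`).
By Euler–Maclaurin with the sawtooth expanded in its Fourier series (`tsum_tail_eq`),
`∑_{m ≥ M} m^{-s} = M^{1-s}/(s-1) + M^{-s}/2 + (s/π) ∑_n (1/n) ∫_M^∞ sin(2πnx) x^{-s-1} dx`.
Put `M = d^{k-1}`, rescale `x` by `M` and sum over `d`: the first two terms give the zeta values,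
and grouping the double series in `(d, n)` by `N = n d^{k-1}` (`summable_regroup`) turns the
last one into the sine series with coefficients `σ^{(k-1)}_{k-1-ks}(N)/N`.

One integration by parts gives `∫_1^∞ sin(2πNx) x^{-s-1} dx = O((2 + |s|)/N)` for `Re s > 0`
(`norm_sinInt_le`). The `(d, n)` term of the double series is therefore
`O((2 + |s|) d^{-(k-1) - k Re s} n^{-2})`, which is summable, locally uniformly in `s`, because
`k ≥ 2`. This yields absolute convergence, and holomorphy by the Weierstrass convergence theorem.
-/

noncomputable section

/-- Wigert's divisor function `d^{(1/k)}(n) = #{d : d ∣ n, d^k ≤ n}`. -/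
def wigertD (k n : ℕ) : ℕ := (n.divisors.filter fun d => d ^ k ≤ n).card

/-- The generalized divisor function `σ_z^{(k)}(n) = ∑_{d ≥ 1, d^k ∣ n} d^z`. -/
def sigmaK (k : ℕ) (z : ℂ) (n : ℕ) : ℂ :=
  ∑ d ∈ n.divisors.filter (fun d => d ^ k ∣ n), (d : ℂ) ^ z

open MeasureTheory Filter Topology Set

/-! ### The oscillatory integral -/

/-- The oscillatory integral `∫_1^∞ sin(2πNx) x^{-s-1} dx`. -/
def sinInt (N : ℕ) (s : ℂ) : ℂ :=
  ∫ x in Set.Ioi (1 : ℝ), (Real.sin (2 * Real.pi * N * x) : ℂ) * (x : ℂ) ^ (-s - 1)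

lemma integrableOn_sin_mul_cpow (N : ℕ) {s : ℂ} (hs : 0 < s.re) {a : ℝ} (ha : 0 < a) :
    IntegrableOn (fun x : ℝ => (Real.sin (2 * Real.pi * N * x) : ℂ) * (x : ℂ) ^ (-s - 1))
      (Ioi a) := by
  have h := integrableOn_Ioi_cpow_of_lt (a := -s - 1) (by simp; linarith) ha
  refine Integrable.bdd_mul (c := 1) h (by fun_prop) (ae_of_all _ fun x => ?_)
  rw [Complex.norm_real]
  exact Real.abs_sin_le_one _

lemma integrableOn_cos_mul_cpow (N : ℕ) {s : ℂ} (hs : 0 < s.re) {a : ℝ} (ha : 0 < a) :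
    IntegrableOn (fun x : ℝ => (Real.cos (2 * Real.pi * N * x) : ℂ) * (x : ℂ) ^ (-s - 2))
      (Ioi a) := by
  have h := integrableOn_Ioi_cpow_of_lt (a := -s - 2) (by simp; linarith) ha
  refine Integrable.bdd_mul (c := 1) h (by fun_prop) (ae_of_all _ fun x => ?_)
  rw [Complex.norm_real]
  exact Real.abs_cos_le_one _

/-- Integration by parts gains a factor `1/N` over the trivial bound. -/
lemma norm_sinInt_le {N : ℕ} (hN : 0 < N) {s : ℂ} (hs : 0 < s.re) :
    ‖sinInt N s‖ ≤ (2 + ‖s‖) / N := by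
  have hN' : (0 : ℝ) < N := by exact_mod_cast hN
  have hNc : (N : ℂ) ≠ 0 := by exact_mod_cast hN.ne'
  have hpi : (Real.pi : ℂ) ≠ 0 := by exact_mod_cast Real.pi_ne_zero
  set c : ℝ := 2 * Real.pi * N with hc
  have hc0 : 0 < c := by positivity
  have hcc : (c : ℂ) ≠ 0 := by exact_mod_cast hc0.ne'
  have hNc' : (N : ℝ) ≤ c := by
    rw [hc]; nlinarith [Real.pi_gt_three]
  have hs1 : -s - 1 ≠ 0 := by
    intro h
    have := congrArg Complex.re h
    simp at this
    linarith
  have hsin := integrableOn_sin_mul_cpow N hs one_pos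
  have hcos := integrableOn_cos_mul_cpow N hs one_pos
  have hderiv : ∀ x ∈ Ici (1 : ℝ), HasDerivAt
      (fun x : ℝ => (Real.cos (c * x) : ℂ) * (x : ℂ) ^ (-s - 1))
      (-(c : ℂ) * ((Real.sin (c * x) : ℂ) * (x : ℂ) ^ (-s - 1))
        + (-s - 1) * ((Real.cos (c * x) : ℂ) * (x : ℂ) ^ (-s - 2))) x := by
    intro x hx
    have hx0 : x ≠ 0 := by
      have : (1 : ℝ) ≤ x := hx
      positivity
    have h1 : HasDerivAt (fun x : ℝ => Real.cos (c * x)) (-Real.sin (c * x) * c) x := by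
      simpa using ((hasDerivAt_id x).const_mul c).cos
    have h2 := hasDerivAt_ofReal_cpow_const hx0 hs1
    refine (h1.ofReal_comp.mul h2).congr_deriv ?_
    push_cast
    rw [show -s - 1 - 1 = -s - 2 by ring]
    ring
  have htend : Tendsto (fun x : ℝ => (Real.cos (c * x) : ℂ) * (x : ℂ) ^ (-s - 1)) atTop
      (𝓝 0) := by
    have h0 : Tendsto (fun x : ℝ => x ^ (-(s.re + 1))) atTop (𝓝 0) :=
      tendsto_rpow_neg_atTop (by linarith)
    refine squeeze_zero_norm' ?_ h0
    filter_upwards [eventually_gt_atTop 0] with x hx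
    rw [norm_mul, Complex.norm_real, Complex.norm_cpow_eq_rpow_re_of_pos hx]
    have : (-s - 1).re = -(s.re + 1) := by simp; ring
    rw [this]
    exact mul_le_of_le_one_left (by positivity) (Real.abs_cos_le_one _)
  have key := integral_Ioi_of_hasDerivAt_of_tendsto' hderiv
    ((hsin.const_mul _).add (hcos.const_mul _)) htend
  rw [integral_add (hsin.const_mul _) (hcos.const_mul _), integral_const_mul,
    integral_const_mul] at key
  change -(c : ℂ) * sinInt N s + _ = _ at key
  set J : ℂ := ∫ x in Ioi (1 : ℝ), (Real.cos (c * x) : ℂ) * (x : ℂ) ^ (-s - 2) with hJ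
  have hJn : ‖J‖ ≤ 1 := by
    have hi : IntegrableOn (fun x : ℝ => x ^ (-s.re - 2)) (Ioi 1) :=
      integrableOn_Ioi_rpow_of_lt (by linarith) one_pos
    calc ‖J‖ ≤ ∫ x in Ioi (1 : ℝ), x ^ (-s.re - 2) := by
          refine norm_integral_le_of_norm_le hi ?_
          refine (ae_restrict_iff' measurableSet_Ioi).mpr (ae_of_all _ fun x hx => ?_)
          have hx0 : (0 : ℝ) < x := one_pos.trans hx
          rw [norm_mul, Complex.norm_real, Complex.norm_cpow_eq_rpow_re_of_pos hx0]
          have : (-s - 2).re = -s.re - 2 := by simp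
          rw [this]
          exact mul_le_of_le_one_left (by positivity) (Real.abs_cos_le_one _)
      _ ≤ 1 := by
          rw [integral_Ioi_rpow_of_lt (by linarith) one_pos, Real.one_rpow,
            show -s.re - 2 + 1 = -(s.re + 1) by ring, neg_div_neg_eq]
          exact (div_le_one (by linarith)).mpr (by linarith)
  have hcos1 : Real.cos (c * 1) = 1 := by
    rw [hc, show 2 * Real.pi * (N : ℝ) * 1 = N * (2 * Real.pi) by ring]
    exact Real.cos_nat_mul_two_pi N
  rw [hcos1] at key
  have hI : (c : ℂ) * sinInt N s = 1 + (-s - 1) * J := by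
    simp at key
    linear_combination -key
  have h3 : c * ‖sinInt N s‖ ≤ 2 + ‖s‖ := by
    have : c * ‖sinInt N s‖ = ‖(c : ℂ) * sinInt N s‖ := by
      rw [norm_mul, Complex.norm_real, Real.norm_of_nonneg hc0.le]
    rw [this, hI]
    calc ‖1 + (-s - 1) * J‖ ≤ ‖(1 : ℂ)‖ + ‖-s - 1‖ * ‖J‖ := by
          rw [← norm_mul]; exact norm_add_le _ _
      _ ≤ 1 + (‖s‖ + 1) * 1 := by
          gcongr
          · simp
          · have := norm_sub_le (-s) 1
            simpa using this
      _ = 2 + ‖s‖ := by ring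
  rw [le_div_iff₀ hN']
  nlinarith [norm_nonneg (sinInt N s)]

/-- `sinInt N` is, up to `s ↦ -s`, the Mellin transform of a bounded function supported on
`(1, ∞)`, hence holomorphic on the right half-plane. -/
lemma differentiableAt_sinInt (N : ℕ) {s : ℂ} (hs : 0 < s.re) :
    DifferentiableAt ℂ (sinInt N) s := by
  set f : ℝ → ℂ := (Ioi (1 : ℝ)).indicator fun x => (Real.sin (2 * Real.pi * N * x) : ℂ) with hf
  have heq : sinInt N = fun s => mellin f (-s) := by
    ext s
    rw [mellin, sinInt]
    have : ∀ t : ℝ, (t : ℂ) ^ (-s - 1) • f t = (Ioi (1 : ℝ)).indicator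
        (fun x : ℝ => (Real.sin (2 * Real.pi * N * x) : ℂ) * (x : ℂ) ^ (-s - 1)) t := by
      intro t
      rw [hf]
      by_cases ht : t ∈ Ioi (1 : ℝ)
      · rw [indicator_of_mem ht, indicator_of_mem ht, smul_eq_mul, mul_comm]
      · rw [indicator_of_notMem ht, indicator_of_notMem ht, smul_zero]
    simp_rw [this]
    rw [setIntegral_indicator measurableSet_Ioi]
    congr 2
    ext x; simp only [mem_Ioi, mem_inter_iff]
    constructor
    · intro h; exact ⟨by linarith, h⟩
    · exact fun h => h.2
  have hbd : ∀ x, ‖f x‖ ≤ 1 := by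
    intro x
    refine (norm_indicator_le_norm_self _ _).trans ?_
    rw [Complex.norm_real]
    exact Real.abs_sin_le_one _
  have hmeas : Measurable f := by
    refine Measurable.indicator ?_ measurableSet_Ioi
    fun_prop
  have hloc : LocallyIntegrableOn f (Ioi 0) := by
    refine LocallyIntegrable.locallyIntegrableOn ?_ _
    refine (locallyIntegrable_const (1 : ℝ)).mono hmeas.aestronglyMeasurable ?_
    exact ae_of_all _ fun x => by simpa using hbd x
  have htop : f =O[atTop] fun x : ℝ => x ^ (-(0 : ℝ)) := by
    refine Asymptotics.IsBigO.of_bound 1 (Eventually.of_forall fun x => ?_)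
    simpa using hbd x
  have hzero : f =O[𝓝[>] 0] fun x : ℝ => x ^ (-((-s).re - 1)) := by
    refine Asymptotics.IsBigO.of_bound 1 ?_
    have : ∀ᶠ x : ℝ in 𝓝[>] 0, x < 1 :=
      nhdsWithin_le_nhds (Iio_mem_nhds one_pos)
    filter_upwards [this] with x hx
    rw [hf, indicator_of_notMem (by simpa using hx.le)]
    simp
  have hm : DifferentiableAt ℂ (mellin f) (-s) :=
    mellin_differentiableAt_of_isBigO_rpow hloc htop (by simpa using hs) hzero (by linarith)
  rw [heq]
  exact hm.comp s differentiable_neg.differentiableAt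

/-! ### Euler–Maclaurin on a unit interval -/

/-- The Fourier expansion of the second Bernoulli polynomial. -/
lemma hasSum_cos_bernoulli_two {t : ℝ} (ht : t ∈ Icc (0 : ℝ) 1) :
    HasSum (fun n : ℕ => (1 / (2 * Real.pi ^ 2 * n ^ 2)) * Real.cos (2 * Real.pi * n * t))
      ((t ^ 2 - t + 1 / 6) / 2) := by
  have h := hasSum_one_div_nat_pow_mul_cos one_ne_zero ht
  have hb : (Polynomial.map (algebraMap ℚ ℝ) (Polynomial.bernoulli (2 * 1))).eval t
      = t ^ 2 - t + 1 / 6 := by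
    simp [Polynomial.bernoulli, Finset.sum_range_succ, bernoulli_two, bernoulli_one]
    ring_nf
  rw [hb] at h
  have h2 := h.mul_left (1 / (2 * Real.pi ^ 2))
  have hpi := Real.pi_ne_zero
  have hval : (t ^ 2 - t + 1 / 6) / 2 = 1 / (2 * Real.pi ^ 2) * ((-1) ^ (1 + 1) *
      (2 * Real.pi) ^ (2 * 1) / 2 / ((2 * 1).factorial : ℝ) * (t ^ 2 - t + 1 / 6)) := by
    simp [Nat.factorial]
    field_simp
  rw [hval]
  refine h2.congr_fun fun n => ?_
  rw [← mul_assoc, one_div_mul_one_div, mul_one]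

/-- Euler–Maclaurin on a unit interval, with the sawtooth replaced by its Fourier series.
That series does not converge absolutely, so the exchange of sum and integral is made after one
integration by parts, where the Fourier series of `B₂` does. -/
lemma hasSum_sin_unit {g g' g'' : ℝ → ℂ} (hg : ∀ t ∈ Icc (0 : ℝ) 1, HasDerivAt g (g' t) t)
    (hg' : ∀ t ∈ Icc (0 : ℝ) 1, HasDerivAt g' (g'' t) t) (hg'' : ContinuousOn g'' (Icc 0 1)) :
    HasSum (fun n : ℕ => (1 / (Real.pi * n : ℂ)) *
        ∫ t in (0 : ℝ)..1, -g' t * (Real.sin (2 * Real.pi * n * t) : ℂ))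
      ((g 0 + g 1) / 2 - ∫ t in (0 : ℝ)..1, g t) := by
  have hpi : (Real.pi : ℂ) ≠ 0 := by exact_mod_cast Real.pi_ne_zero
  have hu : uIcc (0 : ℝ) 1 = Icc 0 1 := uIcc_of_le zero_le_one
  have hg''i : IntervalIntegrable g'' volume 0 1 := by
    apply ContinuousOn.intervalIntegrable; rwa [hu]
  have hgc : ContinuousOn g (Icc 0 1) := fun t ht => (hg t ht).continuousAt.continuousWithinAt
  have hg'c : ContinuousOn g' (Icc 0 1) := fun t ht => (hg' t ht).continuousAt.continuousWithinAt
  have hg'i : IntervalIntegrable g' volume 0 1 := by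
    apply ContinuousOn.intervalIntegrable; rwa [hu]
  set K : ℕ → ℝ → ℂ := fun n t =>
    (((1 / (2 * Real.pi ^ 2 * n ^ 2)) * Real.cos (2 * Real.pi * n * t) : ℝ) : ℂ) with hK
  set P : ℝ → ℂ := fun t => (((t ^ 2 - t + 1 / 6) / 2 : ℝ) : ℂ) with hP
  have hKP : ∀ t ∈ Icc (0 : ℝ) 1, HasSum (fun n => K n t) (P t) := fun t ht =>
    Complex.hasSum_ofReal.mpr (hasSum_cos_bernoulli_two ht)
  -- for `n = 0` both sides vanish, since `1 / 0 = 0`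
  have hterm : ∀ n : ℕ, (1 / (Real.pi * n : ℂ)) *
        ∫ t in (0 : ℝ)..1, -g' t * (Real.sin (2 * Real.pi * n * t) : ℂ)
      = g' 1 * K n 1 - g' 0 * K n 0 - ∫ t in (0 : ℝ)..1, g'' t * K n t := by
    intro n
    rcases Nat.eq_zero_or_pos n with rfl | hn
    · simp [hK]
    have hn' : (n : ℝ) ≠ 0 := by exact_mod_cast hn.ne'
    have hKd : ∀ t ∈ uIcc (0 : ℝ) 1, HasDerivAt (K n)
        ((-(1 / (Real.pi * n)) * Real.sin (2 * Real.pi * n * t) : ℝ) : ℂ) t := by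
      intro t _
      refine HasDerivAt.ofReal_comp ?_
      have h1 : HasDerivAt (fun x : ℝ => Real.cos (2 * Real.pi * n * x))
          (-Real.sin (2 * Real.pi * n * t) * (2 * Real.pi * n)) t := by
        simpa using ((hasDerivAt_id t).const_mul (2 * Real.pi * n)).cos
      refine (h1.const_mul (1 / (2 * Real.pi ^ 2 * (n : ℝ) ^ 2))).congr_deriv ?_
      have := Real.pi_ne_zero
      field_simp
    have hparts := intervalIntegral.integral_mul_deriv_eq_deriv_mul (u := g') (u' := g'')
      (v := K n) (fun t ht => hg' t (hu ▸ ht)) hKd hg''i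
      (Continuous.intervalIntegrable (by fun_prop) _ _)
    rw [← hparts, ← intervalIntegral.integral_const_mul]
    congr 1
    ext t
    push_cast
    ring
  simp_rw [hterm]
  have hsumK : Summable fun n : ℕ => 1 / (2 * Real.pi ^ 2 * (n : ℝ) ^ 2) := by
    have h := (Real.summable_one_div_nat_pow (p := 2)).mpr one_lt_two
    refine (h.mul_left (1 / (2 * Real.pi ^ 2))).congr fun n => ?_
    rw [one_div_mul_one_div]
  obtain ⟨B, hB⟩ := (isCompact_Icc (a := (0 : ℝ)) (b := 1)).exists_bound_of_continuousOn hg''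
  have hint : HasSum (fun n => ∫ t in (0 : ℝ)..1, g'' t * K n t) (∫ t in (0 : ℝ)..1, g'' t * P t) := by
    have hsub : ∀ t, t ∈ uIoc (0 : ℝ) 1 → t ∈ Icc (0 : ℝ) 1 := fun t ht =>
      hu ▸ uIoc_subset_uIcc ht
    refine intervalIntegral.hasSum_integral_of_dominated_convergence
      (fun n _ => B * (1 / (2 * Real.pi ^ 2 * (n : ℝ) ^ 2))) ?_ ?_ ?_ ?_ ?_
    · intro n
      refine AEStronglyMeasurable.mul ?_ (by fun_prop)
      exact (hg''.mono hsub).aestronglyMeasurable measurableSet_uIoc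
    · intro n
      refine ae_of_all _ fun t ht => ?_
      rw [norm_mul]
      have hb := hB t (hsub t ht)
      gcongr
      · exact (norm_nonneg _).trans hb
      · rw [hK, Complex.norm_real, norm_mul, Real.norm_of_nonneg (by positivity)]
        exact mul_le_of_le_one_right (by positivity) (Real.abs_cos_le_one _)
    · exact ae_of_all _ fun t _ => hsumK.mul_left B
    · exact intervalIntegrable_const
    · exact ae_of_all _ fun t ht => (hKP t (hsub t ht)).mul_left _
  have hs := (((hKP 1 (by simp)).mul_left (g' 1)).sub ((hKP 0 (by simp)).mul_left (g' 0))).sub hint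
  -- integrate by parts back, against `B₂` and then `B₁`
  have hPd : ∀ t ∈ uIcc (0 : ℝ) 1, HasDerivAt P ((t - 1 / 2 : ℝ) : ℂ) t := by
    intro t _
    refine HasDerivAt.ofReal_comp ?_
    have := ((((hasDerivAt_id t).pow 2).sub (hasDerivAt_id t)).add_const (1 / 6 : ℝ)).div_const 2
    refine this.congr_deriv ?_
    simp; ring
  have h1 := intervalIntegral.integral_mul_deriv_eq_deriv_mul (u := g') (u' := g'')
      (v := P) (fun t ht => hg' t (hu ▸ ht)) hPd hg''i
      (Continuous.intervalIntegrable (by fun_prop) _ _)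
  have hQd : ∀ t ∈ uIcc (0 : ℝ) 1, HasDerivAt (fun t : ℝ => ((t - 1 / 2 : ℝ) : ℂ)) 1 t := by
    intro t _
    have := ((hasDerivAt_id t).sub_const (1 / 2 : ℝ)).ofReal_comp
    simpa using this
  have h2 := intervalIntegral.integral_mul_deriv_eq_deriv_mul (u := g) (u' := g')
      (v := fun t : ℝ => ((t - 1 / 2 : ℝ) : ℂ)) (fun t ht => hg t (hu ▸ ht)) hQd hg'i
      (Continuous.intervalIntegrable (by fun_prop) _ _)
  rw [← h1] at hs
  simp only [mul_one] at h2
  have hval : (g 0 + g 1) / 2 - ∫ t in (0 : ℝ)..1, g t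
      = ∫ t in (0 : ℝ)..1, g' t * ((t - 1 / 2 : ℝ) : ℂ) := by
    rw [h2]
    push_cast
    ring
  rw [hval]
  exact hs

/-! ### Tails of the zeta series -/

/-- The `n`-th term of the Fourier form of the Euler–Maclaurin remainder for `∑_{m ≥ M} m^{-s}`. -/
def remTerm (s : ℂ) (M n : ℕ) : ℂ := 1 / (n : ℂ) * ((M : ℂ) ^ (-s) * sinInt (n * M) s)

lemma integral_Ioi_eq_sinInt {M : ℕ} (hM : 0 < M) (n : ℕ) (s : ℂ) :
    ∫ x in Ioi (M : ℝ), (Real.sin (2 * Real.pi * n * x) : ℂ) * (x : ℂ) ^ (-s - 1)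
      = (M : ℂ) ^ (-s) * sinInt (n * M) s := by
  have hM' : (0 : ℝ) < M := by exact_mod_cast hM
  have hMc : (M : ℂ) ≠ 0 := by exact_mod_cast hM.ne'
  have h := integral_comp_mul_left_Ioi
    (fun x : ℝ => (Real.sin (2 * Real.pi * n * x) : ℂ) * (x : ℂ) ^ (-s - 1)) 1 hM'
  rw [mul_one] at h
  have h2 : ∫ x in Ioi (1 : ℝ), (Real.sin (2 * Real.pi * n * (M * x)) : ℂ)
      * ((M * x : ℝ) : ℂ) ^ (-s - 1) = (M : ℂ) ^ (-s - 1) * sinInt (n * M) s := by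
    rw [sinInt, ← integral_const_mul]
    refine setIntegral_congr_fun measurableSet_Ioi fun x hx => ?_
    have hx0 : (0 : ℝ) ≤ x := (one_pos.trans hx).le
    rw [Complex.ofReal_mul, Complex.mul_cpow_ofReal_nonneg hM'.le hx0, Complex.ofReal_natCast,
      show 2 * Real.pi * (n : ℝ) * (M * x) = 2 * Real.pi * ((n * M : ℕ) : ℝ) * x by
        push_cast; ring]
    ring
  rw [h2] at h
  rw [Complex.cpow_sub _ _ hMc, Complex.cpow_one, Complex.real_smul] at h
  rw [Complex.ofReal_inv, Complex.ofReal_natCast] at h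
  field_simp at h
  exact h.symm

lemma norm_remTerm_le {s : ℂ} (hs : 0 < s.re) {M : ℕ} (hM : 0 < M) (n : ℕ) :
    ‖remTerm s M n‖ ≤ (2 + ‖s‖) * (M : ℝ) ^ (-s.re) * (1 / (n : ℝ) ^ 2) := by
  rcases Nat.eq_zero_or_pos n with rfl | hn
  · simp [remTerm]
  have hM' : (0 : ℝ) < M := by exact_mod_cast hM
  have hM1 : (1 : ℝ) ≤ M := by exact_mod_cast hM
  have hn' : (0 : ℝ) < n := by exact_mod_cast hn
  have h1 : ‖(M : ℂ) ^ (-s)‖ = (M : ℝ) ^ (-s.re) := by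
    have := Complex.norm_cpow_eq_rpow_re_of_pos hM' (-s)
    simpa using this
  have h2 : ‖sinInt (n * M) s‖ ≤ (2 + ‖s‖) / n := by
    refine (norm_sinInt_le (Nat.mul_pos hn hM) hs).trans ?_
    gcongr
    nlinarith
  rw [remTerm, norm_mul, norm_mul, h1, norm_div, norm_one, Complex.norm_natCast]
  calc 1 / (n : ℝ) * ((M : ℝ) ^ (-s.re) * ‖sinInt (n * M) s‖)
      ≤ 1 / (n : ℝ) * ((M : ℝ) ^ (-s.re) * ((2 + ‖s‖) / n)) := by gcongr
    _ = _ := by field_simp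

lemma summable_remTerm {s : ℂ} (hs : 0 < s.re) {M : ℕ} (hM : 0 < M) :
    Summable (remTerm s M) :=
  Summable.of_norm_bounded
    (((Real.summable_one_div_nat_pow (p := 2)).mpr one_lt_two).mul_left _)
    (norm_remTerm_le hs hM)

lemma tendsto_natCast_cpow_zero {z : ℂ} (hz : z.re < 0) :
    Tendsto (fun M : ℕ => (M : ℂ) ^ z) atTop (𝓝 0) := by
  have h0 : Tendsto (fun M : ℕ => (M : ℝ) ^ (-(-z.re))) atTop (𝓝 0) :=
    (tendsto_rpow_neg_atTop (by linarith)).comp tendsto_natCast_atTop_atTop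
  refine squeeze_zero_norm' ?_ h0
  filter_upwards [eventually_gt_atTop 0] with M hM
  have := Complex.norm_cpow_eq_rpow_re_of_pos (x := M) (by exact_mod_cast hM) z
  rw [neg_neg, ← this]
  simp

lemma tendsto_tsum_remTerm {s : ℂ} (hs : 0 < s.re) :
    Tendsto (fun M : ℕ => ∑' n, remTerm s M n) atTop (𝓝 0) := by
  have h0 : Tendsto (fun M : ℕ => (M : ℝ) ^ (-s.re)) atTop (𝓝 0) :=
    (tendsto_rpow_neg_atTop hs).comp tendsto_natCast_atTop_atTop
  have h1 := (h0.const_mul (2 + ‖s‖)).mul_const (∑' n : ℕ, 1 / (n : ℝ) ^ 2)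
  rw [mul_zero, zero_mul] at h1
  refine squeeze_zero_norm' ?_ h1
  filter_upwards [eventually_gt_atTop 0] with M hM
  have hsum := (Real.summable_one_div_nat_pow (p := 2)).mpr one_lt_two
  refine (tsum_of_norm_bounded ((hsum.mul_left _).hasSum) (norm_remTerm_le hs hM)).trans_eq ?_
  rw [tsum_mul_left]

/-- One step of the telescoping: the remainders at `M` and `M + 1` differ by the trapezoidal
error of `x^{-s}` on `[M, M + 1]`. -/
lemma tsum_remTerm_sub {s : ℂ} (hs : 1 < s.re) {M : ℕ} (hM : 0 < M) :
    s / Real.pi * ∑' n, remTerm s M n - s / Real.pi * ∑' n, remTerm s (M + 1) n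
      = ((M : ℂ) ^ (-s) + ((M + 1 : ℕ) : ℂ) ^ (-s)) / 2
        + (((M + 1 : ℕ) : ℂ) ^ (1 - s) - (M : ℂ) ^ (1 - s)) / (s - 1) := by
  have hs0 : 0 < s.re := by linarith
  have hM' : (0 : ℝ) < M := by exact_mod_cast hM
  have hsne : -s ≠ 0 := by
    intro h
    have := congrArg Complex.re h
    simp at this
    linarith
  have hs1ne : -s - 1 ≠ 0 := by
    intro h
    have := congrArg Complex.re h
    simp at this
    linarith
  have hs1 : s - 1 ≠ 0 := by
    intro h
    have := congrArg Complex.re h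
    simp at this
    linarith
  have hd : ∀ (z : ℂ), z ≠ 0 → ∀ t ∈ Icc (0 : ℝ) 1,
      HasDerivAt (fun t : ℝ => ((M + t : ℝ) : ℂ) ^ z) (z * ((M + t : ℝ) : ℂ) ^ (z - 1)) t := by
    intro z hz t ht
    have hpos : (M : ℝ) + t ≠ 0 := by have := ht.1; positivity
    exact (hasDerivAt_ofReal_cpow_const hpos hz).comp_const_add (M : ℝ) t
  have hunit := hasSum_sin_unit (g := fun t : ℝ => ((M + t : ℝ) : ℂ) ^ (-s))
    (g' := fun t : ℝ => -s * ((M + t : ℝ) : ℂ) ^ (-s - 1))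
    (g'' := fun t : ℝ => -s * ((-s - 1) * ((M + t : ℝ) : ℂ) ^ (-s - 1 - 1)))
    (hd _ hsne) (fun t ht => (hd _ hs1ne t ht).const_mul _) (by
      refine ContinuousOn.mul continuousOn_const (ContinuousOn.mul continuousOn_const ?_)
      intro t ht
      by_cases hz : -s - 1 - 1 = 0
      · simp only [hz, Complex.cpow_zero]; exact continuousWithinAt_const
      · exact (hd _ hz t ht).continuousAt.continuousWithinAt)
  have hterm : ∀ n : ℕ, (1 / (Real.pi * n : ℂ)) *
      ∫ t in (0 : ℝ)..1, -(-s * ((M + t : ℝ) : ℂ) ^ (-s - 1)) *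
        (Real.sin (2 * Real.pi * n * t) : ℂ)
      = s / Real.pi * (remTerm s M n - remTerm s (M + 1) n) := by
    intro n
    have hA := integrableOn_sin_mul_cpow n hs0 hM'
    have hsub := intervalIntegral.integral_Ioi_sub_Ioi hA (b := ((M + 1 : ℕ) : ℝ))
      (by push_cast; linarith)
    rw [integral_Ioi_eq_sinInt hM, integral_Ioi_eq_sinInt (Nat.succ_pos M)] at hsub
    have hshift := intervalIntegral.integral_comp_add_left (a := 0) (b := 1)
      (fun x : ℝ => (Real.sin (2 * Real.pi * n * x) : ℂ) * (x : ℂ) ^ (-s - 1)) (M : ℝ)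
    rw [add_zero] at hshift
    rw [Nat.cast_add, Nat.cast_one, ← hshift] at hsub
    have hsin : ∀ t : ℝ, Real.sin (2 * Real.pi * n * (M + t)) = Real.sin (2 * Real.pi * n * t) := by
      intro t
      rw [show 2 * Real.pi * n * (M + t) = 2 * Real.pi * n * t + ((n * M : ℕ) : ℝ) * (2 * Real.pi)
        by push_cast; ring]
      exact Real.sin_add_nat_mul_two_pi _ _
    simp_rw [hsin] at hsub
    have h3 : ∫ t in (0 : ℝ)..1, -(-s * ((M + t : ℝ) : ℂ) ^ (-s - 1)) *
        (Real.sin (2 * Real.pi * n * t) : ℂ) = s * ∫ t in (0 : ℝ)..1,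
          (Real.sin (2 * Real.pi * n * t) : ℂ) * ((M + t : ℝ) : ℂ) ^ (-s - 1) := by
      rw [← intervalIntegral.integral_const_mul]
      congr 1
      ext t
      ring
    rw [h3, ← hsub, remTerm, remTerm, one_div_mul_eq_div]
    push_cast
    field_simp
  simp_rw [hterm] at hunit
  have hr := ((summable_remTerm hs0 hM).hasSum.sub
    (summable_remTerm hs0 (Nat.succ_pos M)).hasSum).mul_left (s / (Real.pi : ℂ))
  have heq := hr.unique hunit
  rw [← mul_sub]
  refine heq.trans ?_
  have hint : ∫ t in (0 : ℝ)..1, ((M + t : ℝ) : ℂ) ^ (-s)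
      = (((M + 1 : ℕ) : ℂ) ^ (1 - s) - (M : ℂ) ^ (1 - s)) / (1 - s) := by
    have hshift := intervalIntegral.integral_comp_add_left (a := 0) (b := 1)
      (fun x : ℝ => (x : ℂ) ^ (-s)) (M : ℝ)
    rw [hshift, integral_cpow]
    · push_cast
      rw [add_zero, show -s + 1 = 1 - s by ring]
    · right
      refine ⟨fun h => hs1 (by linear_combination -h), ?_⟩
      rw [uIcc_of_le (by linarith)]
      intro h
      have := h.1
      linarith
  rw [hint, show (1 : ℂ) - s = -(s - 1) by ring, div_neg]
  push_cast
  rw [add_zero]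
  ring

/-- Euler–Maclaurin for the zeta tail `∑_{m ≥ M} m^{-s}`. Both sides have the same increments
in `M` and tend to `0`. -/
lemma tsum_tail_eq {s : ℂ} (hs : 1 < s.re) {M : ℕ} (hM : 0 < M) :
    ∑' i : ℕ, ((i + M : ℕ) : ℂ) ^ (-s)
      = (M : ℂ) ^ (1 - s) / (s - 1) + (M : ℂ) ^ (-s) / 2
        + s / Real.pi * ∑' n, remTerm s M n := by
  have hs0 : 0 < s.re := by linarith
  have hsum : Summable fun m : ℕ => (m : ℂ) ^ (-s) := by
    refine (Complex.summable_one_div_nat_cpow.mpr hs).congr fun m => ?_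
    rw [Complex.cpow_neg, one_div]
  set D : ℕ → ℂ := fun M => ∑' i : ℕ, ((i + M : ℕ) : ℂ) ^ (-s)
    - (M : ℂ) ^ (1 - s) / (s - 1) - (M : ℂ) ^ (-s) / 2
        - s / Real.pi * ∑' n, remTerm s M n with hD
  have hstep : ∀ M : ℕ, 0 < M → D (M + 1) = D M := by
    intro M hM
    have hZ : ∑' i : ℕ, ((i + M : ℕ) : ℂ) ^ (-s)
        = (M : ℂ) ^ (-s) + ∑' i : ℕ, ((i + (M + 1) : ℕ) : ℂ) ^ (-s) := by
      rw [Summable.tsum_eq_zero_add ((summable_nat_add_iff M).mpr hsum)]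
      rw [zero_add]
      congr 2
      ext i
      rw [add_assoc, add_comm 1 M]
    have hR := tsum_remTerm_sub hs hM
    simp only [hD]
    rw [hZ]
    linear_combination hR
  have hconst : ∀ i : ℕ, D (i + M) = D M := by
    intro i
    induction i with
    | zero => rw [zero_add]
    | succ i ih =>
      rw [← ih, show i + 1 + M = i + M + 1 by ring]
      exact hstep _ (by omega)
  have hlim : Tendsto D atTop (𝓝 0) := by
    have h1 := tendsto_sum_nat_add fun m : ℕ => (m : ℂ) ^ (-s)
    have h2 := (tendsto_natCast_cpow_zero (z := 1 - s) (by simp; linarith)).div_const (s - 1)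
    have h3 := (tendsto_natCast_cpow_zero (z := -s) (by simp; linarith)).div_const 2
    have h4 := (tendsto_tsum_remTerm hs0).const_mul (s / (Real.pi : ℂ))
    have h5 := ((h1.sub h2).sub h3).sub h4
    simp only [zero_div, mul_zero, sub_zero] at h5
    exact h5
  have hlim2 : Tendsto (fun i => D (i + M)) atTop (𝓝 0) :=
    (tendsto_add_atTop_iff_nat M).mpr hlim
  simp_rw [hconst] at hlim2
  have h0 : D M = 0 := tendsto_nhds_unique tendsto_const_nhds hlim2
  simp only [hD] at h0
  linear_combination h0

/-! ### Regrouping double series -/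

lemma tsum_pnat_eq {φ : ℕ → ℂ} (h0 : φ 0 = 0) : ∑' d : ℕ+, φ d = ∑' d : ℕ, φ d := by
  refine Function.Injective.tsum_eq PNat.coe_injective ?_
  intro d hd
  have : d ≠ 0 := by rintro rfl; exact hd h0
  exact ⟨⟨d, Nat.pos_of_ne_zero this⟩, rfl⟩

lemma tsum_pnat_eq_sum_divisors {φ : ℕ → ℂ} (N : ℕ+) (h : ∀ d : ℕ, ¬ d ∣ (N : ℕ) → φ d = 0) :
    ∑' d : ℕ+, φ d = ∑ d ∈ (N : ℕ).divisors, φ d := by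
  rw [tsum_pnat_eq (h 0 (by simp))]
  refine tsum_eq_sum fun d hd => h d fun hdvd => hd ?_
  exact Nat.mem_divisors.mpr ⟨hdvd, N.ne_zero⟩

/-- Regrouping a double series over `(d, n)` according to the value `N = n * w d`. -/
lemma summable_regroup {w : ℕ+ → ℕ+} {F : ℕ+ → ℕ+ → ℂ}
    (h : Summable fun p : ℕ+ × ℕ+ => F p.1 (p.2 * w p.1)) :
    Summable (fun p : ℕ+ × ℕ+ => if (w p.1 : ℕ) ∣ p.2 then F p.1 p.2 else 0) ∧
    ∑' p : ℕ+ × ℕ+, F p.1 (p.2 * w p.1)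
      = ∑' N : ℕ+, ∑' d : ℕ+, if (w d : ℕ) ∣ N then F d N else 0 := by
  set G : ℕ+ × ℕ+ → ℂ := fun p => if (w p.1 : ℕ) ∣ p.2 then F p.1 p.2 else 0 with hG
  set e : ℕ+ × ℕ+ → ℕ+ × ℕ+ := fun p => (p.1, p.2 * w p.1) with he
  have hinj : Function.Injective e := by
    rintro ⟨a, b⟩ ⟨c, d⟩ hab
    simp only [he, Prod.mk.injEq] at hab
    obtain ⟨rfl, h2⟩ := hab
    rw [mul_right_cancel h2]
  have hsupp : ∀ p ∉ range e, G p = 0 := by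
    intro p hp
    simp only [hG]
    refine if_neg fun hdvd => hp ?_
    obtain ⟨c, hc⟩ := PNat.dvd_iff.mpr hdvd
    exact ⟨(p.1, c), by simp only [he]; rw [mul_comm, ← hc]⟩
  have hcomp : G ∘ e = fun p => F p.1 (p.2 * w p.1) := by
    ext p
    simp [hG, he]
  have hsum : Summable G := by
    rw [← hinj.summable_iff hsupp, hcomp]
    exact h
  refine ⟨hsum, ?_⟩
  have h1 : ∑' p : ℕ+ × ℕ+, F p.1 (p.2 * w p.1) = ∑' p, G p := by
    rw [← hinj.tsum_eq (f := G)]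
    · exact tsum_congr fun p => (congrFun hcomp p).symm
    · intro p hp
      by_contra hr
      exact hp (hsupp p hr)
  rw [h1, hsum.tsum_prod]
  exact (Summable.tsum_comm (f := fun d N => G (d, N)) hsum).symm

lemma natCast_pow_cpow (d j : ℕ) (z : ℂ) : ((d ^ j : ℕ) : ℂ) ^ z = (d : ℂ) ^ (j * z) := by
  rw [Complex.cpow_nat_mul]
  induction j with
  | zero => simp
  | succ j ih => rw [pow_succ, pow_succ, Nat.cast_mul, Complex.natCast_mul_natCast_cpow, ih]

/-! ### Convergence and holomorphy of the sine series -/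

/-- The summand of the sine series attached to a single divisor `d` of `N`. -/
def divTerm (k : ℕ) (s : ℂ) (d N : ℕ+) : ℂ :=
  (d : ℂ) ^ ((k : ℂ) - 1 - (k : ℂ) * s) / (N : ℂ) * sinInt N s

lemma norm_divTerm_le {k : ℕ} (hk : 2 ≤ k) {s : ℂ} {δ : ℝ} (hδ : 0 < δ) (hs : δ ≤ s.re)
    (d n : ℕ+) :
    ‖divTerm k s d (n * d ^ (k - 1))‖
      ≤ (2 + ‖s‖) * ((d : ℝ) ^ (-1 - δ) * (1 / (n : ℝ) ^ 2)) := by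
  have hd : (0 : ℝ) < (d : ℕ) := by exact_mod_cast d.pos
  have hd1 : (1 : ℝ) ≤ (d : ℕ) := by exact_mod_cast (d.pos : 1 ≤ (d : ℕ))
  have hn : (0 : ℝ) < (n : ℕ) := by exact_mod_cast n.pos
  have hk' : (2 : ℝ) ≤ k := by exact_mod_cast hk
  have hI := norm_sinInt_le (n * d ^ (k - 1)).pos (hδ.trans_le hs)
  have hcast : (((n * d ^ (k - 1) : ℕ+) : ℕ) : ℝ) = (n : ℕ) * ((d : ℕ) : ℝ) ^ ((k : ℝ) - 1) := by
    rw [show (k : ℝ) - 1 = ((k - 1 : ℕ) : ℝ) by push_cast [Nat.cast_sub (by omega : 1 ≤ k)]; ring,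
      Real.rpow_natCast]
    push_cast
    ring
  have hnorm : ‖((d : ℕ) : ℂ) ^ ((k : ℂ) - 1 - (k : ℂ) * s)‖
      = ((d : ℕ) : ℝ) ^ ((k : ℝ) - 1 - k * s.re) := by
    have := Complex.norm_cpow_eq_rpow_re_of_pos hd ((k : ℂ) - 1 - (k : ℂ) * s)
    simpa using this
  rw [divTerm, norm_mul, norm_div, hnorm, Complex.norm_natCast]
  rw [hcast] at hI ⊢
  set A : ℝ := ((d : ℕ) : ℝ) ^ ((k : ℝ) - 1) with hA
  have hApos : 0 < A := by positivity
  have hpow : ((d : ℕ) : ℝ) ^ ((k : ℝ) - 1 - k * s.re) ≤ A ^ 2 * ((d : ℕ) : ℝ) ^ (-1 - δ) := by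
    rw [hA, sq, ← Real.rpow_add hd, ← Real.rpow_add hd]
    refine Real.rpow_le_rpow_of_exponent_le hd1 ?_
    nlinarith
  calc _ ≤ (A ^ 2 * ((d : ℕ) : ℝ) ^ (-1 - δ)) / ((n : ℕ) * A) * ((2 + ‖s‖) / ((n : ℕ) * A)) := by
        gcongr
    _ = _ := by field_simp

lemma summable_majorant {δ : ℝ} (hδ : 0 < δ) :
    Summable fun p : ℕ+ × ℕ+ => ((p.1 : ℕ) : ℝ) ^ (-1 - δ) * (1 / ((p.2 : ℕ) : ℝ) ^ 2) := by
  have h1 : Summable fun d : ℕ+ => ((d : ℕ) : ℝ) ^ (-1 - δ) :=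
    (Real.summable_nat_rpow.mpr (by linarith)).comp_injective PNat.coe_injective
  have h2 : Summable fun n : ℕ+ => 1 / ((n : ℕ) : ℝ) ^ 2 :=
    ((Real.summable_one_div_nat_pow (p := 2)).mpr one_lt_two).comp_injective PNat.coe_injective
  exact h1.mul_of_nonneg h2 (fun d => by positivity) (fun n => by positivity)

lemma summable_divTerm {k : ℕ} (hk : 2 ≤ k) {s : ℂ} (hs : 0 < s.re) :
    Summable fun p : ℕ+ × ℕ+ => divTerm k s p.1 (p.2 * p.1 ^ (k - 1)) :=
  Summable.of_norm_bounded ((summable_majorant hs).mul_left (2 + ‖s‖))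
    fun p => norm_divTerm_le hk hs le_rfl p.1 p.2

/-- The `N`-th term of the sine series. -/
def wigertSineTerm (k : ℕ) (s : ℂ) (N : ℕ+) : ℂ :=
  sigmaK (k - 1) ((k : ℂ) - 1 - (k : ℂ) * s) N / ((N : ℕ) : ℂ) * sinInt N s

lemma tsum_divTerm_eq_wigertSineTerm {k : ℕ} (hk : 2 ≤ k) (s : ℂ) (N : ℕ+) :
    ∑' d : ℕ+, (if ((d ^ (k - 1) : ℕ+) : ℕ) ∣ N then divTerm k s d N else 0)
      = wigertSineTerm k s N := by
  have h := tsum_pnat_eq_sum_divisors (φ := fun d => if d ^ (k - 1) ∣ (N : ℕ) then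
    (d : ℂ) ^ ((k : ℂ) - 1 - (k : ℂ) * s) / (N : ℂ) * sinInt N s else 0) N (by
      intro d hd
      exact if_neg fun h => hd ((dvd_pow_self d (by omega)).trans h))
  refine (tsum_congr fun d => ?_).trans (h.trans ?_)
  · exact if_congr (by rw [PNat.pow_coe]) rfl rfl
  rw [wigertSineTerm, sigmaK, ← Finset.sum_filter, Finset.sum_div, Finset.sum_mul]

lemma summable_norm_wigertSineTerm {k : ℕ} (hk : 2 ≤ k) {s : ℂ} (hs : 0 < s.re) :
    Summable fun N => ‖wigertSineTerm k s N‖ := by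
  have h := (summable_regroup (w := fun d => d ^ (k - 1)) (F := divTerm k s)
    (summable_divTerm hk hs)).1
  have heq := tsum_divTerm_eq_wigertSineTerm hk s
  generalize wigertSineTerm k s = T at heq ⊢
  set G : ℕ+ → ℕ+ → ℂ := fun d N =>
    if ((d ^ (k - 1) : ℕ+) : ℕ) ∣ N then divTerm k s d N else 0 with hG
  have hGs : Summable fun p : ℕ+ × ℕ+ => ‖G p.1 p.2‖ := h.norm
  have heq' : ∀ N, ∑' d, G d N = T N := heq
  clear_value G
  have hswap : Summable fun q : ℕ+ × ℕ+ => ‖G q.2 q.1‖ :=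
    (Equiv.prodComm ℕ+ ℕ+).summable_iff.mpr hGs
  refine Summable.of_nonneg_of_le (fun N => norm_nonneg _) (fun N => ?_) hswap.prod
  rw [← heq']
  exact norm_tsum_le_tsum_norm (hswap.prod_factor N)

lemma tsum_wigertSineTerm {k : ℕ} (hk : 2 ≤ k) {s : ℂ} (hs : 0 < s.re) :
    ∑' N, wigertSineTerm k s N = ∑' p : ℕ+ × ℕ+, divTerm k s p.1 (p.2 * p.1 ^ (k - 1)) := by
  rw [(summable_regroup (w := fun d => d ^ (k - 1)) (F := divTerm k s)
    (summable_divTerm hk hs)).2]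
  exact tsum_congr fun N => (tsum_divTerm_eq_wigertSineTerm hk s N).symm

lemma differentiableOn_tsum_wigertSineTerm {k : ℕ} (hk : 2 ≤ k) :
    DifferentiableOn ℂ (fun s => ∑' N, wigertSineTerm k s N) {s : ℂ | 0 < s.re} := by
  have hmain : DifferentiableOn ℂ
      (fun s => ∑' p : ℕ+ × ℕ+, divTerm k s p.1 (p.2 * p.1 ^ (k - 1))) {s : ℂ | 0 < s.re} := by
    intro s hs
    have hs' : 0 < s.re := hs
    set U : Set ℂ := {z | s.re / 2 < z.re} ∩ Metric.ball s 1 with hU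
    have hUo : IsOpen U :=
      (isOpen_lt continuous_const Complex.continuous_re).inter Metric.isOpen_ball
    have hsU : s ∈ U := ⟨by change s.re / 2 < s.re; linarith, Metric.mem_ball_self one_pos⟩
    have hδ : 0 < s.re / 2 := by linarith
    have hd := Complex.differentiableOn_tsum_of_summable_norm
      (F := fun (p : ℕ+ × ℕ+) s => divTerm k s p.1 (p.2 * p.1 ^ (k - 1))) (U := U)
      ((summable_majorant hδ).mul_left (3 + ‖s‖)) ?_ hUo ?_
    · exact (hd.differentiableAt (hUo.mem_nhds hsU)).differentiableWithinAt
    · rintro ⟨d, n⟩ z hz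
      have hz0 : 0 < z.re := hδ.trans hz.1
      have hdc : ((d : ℕ) : ℂ) ≠ 0 := by exact_mod_cast d.ne_zero
      refine DifferentiableAt.differentiableWithinAt ?_
      refine DifferentiableAt.mul (DifferentiableAt.div_const ?_ _) (differentiableAt_sinInt _ hz0)
      exact DifferentiableAt.const_cpow (by fun_prop) (Or.inl hdc)
    · rintro ⟨d, n⟩ z hz
      refine (norm_divTerm_le hk hδ (le_of_lt hz.1) d n).trans ?_
      have h1 : ‖z‖ ≤ 1 + ‖s‖ := by
        have h2 : ‖z - s‖ < 1 := by simpa [dist_eq_norm] using hz.2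
        have h3 := norm_add_le (z - s) s
        rw [sub_add_cancel] at h3
        linarith
      refine mul_le_mul_of_nonneg_right (by linarith) (by positivity)
  exact hmain.congr fun s hs => tsum_wigertSineTerm hk hs

/-! ### The Dirichlet series identity -/

lemma summable_pnat_cpow {z : ℂ} (hz : 1 < z.re) : Summable fun d : ℕ+ => ((d : ℕ) : ℂ) ^ (-z) := by
  have h : Summable fun m : ℕ => (m : ℂ) ^ (-z) := by
    refine (Complex.summable_one_div_nat_cpow.mpr hz).congr fun m => ?_
    rw [Complex.cpow_neg, one_div]
  exact h.comp_injective PNat.coe_injective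

lemma tsum_pnat_cpow {z : ℂ} (hz : 1 < z.re) :
    ∑' d : ℕ+, ((d : ℕ) : ℂ) ^ (-z) = riemannZeta z := by
  have hz0 : -z ≠ 0 := by
    intro h
    have := congrArg Complex.re h
    simp at this
    linarith
  rw [zeta_eq_tsum_one_div_nat_cpow hz,
    tsum_pnat_eq (φ := fun d => (d : ℂ) ^ (-z)) (by simp [Complex.zero_cpow hz0])]
  refine tsum_congr fun m => ?_
  rw [Complex.cpow_neg, one_div]

/-- `∑_j d^{(1/k)}(j) j^{-s} = ∑_d d^{-s} ∑_{m ≥ d^{k-1}} m^{-s}`, by writing `j = d m`. -/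
lemma tsum_wigertD {k : ℕ} (hk : 2 ≤ k) {s : ℂ} (hs : 1 < s.re) :
    Summable (fun d : ℕ+ => ((d : ℕ) : ℂ) ^ (-s)
      * ∑' i : ℕ, ((i + (d : ℕ) ^ (k - 1) : ℕ) : ℂ) ^ (-s)) ∧
    ∑' j : ℕ+, (wigertD k j : ℂ) * ((j : ℕ) : ℂ) ^ (-s)
      = ∑' d : ℕ+, ((d : ℕ) : ℂ) ^ (-s)
        * ∑' i : ℕ, ((i + (d : ℕ) ^ (k - 1) : ℕ) : ℂ) ^ (-s) := by
  set F : ℕ+ → ℕ+ → ℂ := fun d j =>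
    if (d : ℕ) ^ k ≤ (j : ℕ) then ((j : ℕ) : ℂ) ^ (-s) else 0 with hF
  have hFmul : ∀ d m : ℕ+, F d (m * d) = if (d : ℕ) ^ (k - 1) ≤ (m : ℕ) then
      ((d : ℕ) : ℂ) ^ (-s) * ((m : ℕ) : ℂ) ^ (-s) else 0 := by
    intro d m
    have hiff : (d : ℕ) ^ k ≤ ((m * d : ℕ+) : ℕ) ↔ (d : ℕ) ^ (k - 1) ≤ (m : ℕ) := by
      obtain ⟨l, rfl⟩ : ∃ l, k = l + 1 := ⟨k - 1, by omega⟩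
      rw [PNat.mul_coe, pow_succ, Nat.add_sub_cancel]
      exact Nat.mul_le_mul_right_iff d.pos
    simp only [hF, hiff]
    congr 1
    rw [PNat.mul_coe, Nat.cast_mul, Complex.natCast_mul_natCast_cpow, mul_comm]
  have hsumm : Summable fun p : ℕ+ × ℕ+ => F p.1 (p.2 * p.1) := by
    have h1 := (summable_pnat_cpow hs).norm
    refine Summable.of_norm_bounded (h1.mul_of_nonneg h1 (fun d => norm_nonneg _)
      (fun d => norm_nonneg _)) fun p => ?_
    rw [hFmul, ← norm_mul]
    split_ifs
    · exact le_rfl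
    · rw [norm_zero]; exact norm_nonneg _
  have htail : ∀ d : ℕ+, ∑' m : ℕ+, F d (m * d) = ((d : ℕ) : ℂ) ^ (-s)
      * ∑' i : ℕ, ((i + (d : ℕ) ^ (k - 1) : ℕ) : ℂ) ^ (-s) := by
    intro d
    have hMpos : 0 < (d : ℕ) ^ (k - 1) := pow_pos d.pos _
    set e : ℕ → ℕ+ := fun i => ⟨i + (d : ℕ) ^ (k - 1), by omega⟩ with he
    have hinj : Function.Injective e := by
      intro a b hab
      have := congrArg PNat.val hab
      simpa [he] using this
    have h := hinj.tsum_eq (f := fun m => F d (m * d)) (by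
      intro m hm
      have hle : (d : ℕ) ^ (k - 1) ≤ (m : ℕ) := by
        by_contra hlt
        exact hm (by simp only [hFmul]; exact if_neg hlt)
      refine ⟨(m : ℕ) - (d : ℕ) ^ (k - 1), PNat.eq ?_⟩
      simp only [he, PNat.mk_coe]
      omega)
    rw [← h, ← tsum_mul_left]
    refine tsum_congr fun i => ?_
    rw [hFmul]
    exact if_pos (by simp [he])
  obtain ⟨-, h2⟩ := summable_regroup (w := fun d => d) (F := F) hsumm
  refine ⟨?_, ?_⟩
  · exact hsumm.prod.congr htail
  rw [← tsum_congr htail, ← hsumm.tsum_prod, h2]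
  refine tsum_congr fun j => ?_
  have h3 := tsum_pnat_eq_sum_divisors (φ := fun d => if d ∣ (j : ℕ) then
    (if d ^ k ≤ (j : ℕ) then ((j : ℕ) : ℂ) ^ (-s) else 0) else 0) j
    (fun d hd => if_neg hd)
  simp only [hF]
  rw [h3, wigertD, Finset.card_filter, Nat.cast_sum, Finset.sum_mul]
  refine Finset.sum_congr rfl fun d hd => ?_
  rw [if_pos (Nat.dvd_of_mem_divisors hd)]
  split_ifs <;> simp

/-- The Dirichlet series identity: insert the Euler–Maclaurin formula for each tail. -/
lemma wigert_identity {k : ℕ} (hk : 2 ≤ k) {s : ℂ} (hs : 1 < s.re) :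
    (1 / 2) * riemannZeta ((k : ℂ) * s)
          + riemannZeta ((k : ℂ) * s - ((k : ℂ) - 1)) / (s - 1)
          + s / (Real.pi : ℂ) * ∑' N, wigertSineTerm k s N
      = ∑' j : ℕ+, (wigertD k j : ℂ) * ((j : ℕ) : ℂ) ^ (-s) := by
  have hs0 : 0 < s.re := by linarith
  have hk' : (2 : ℝ) ≤ k := by exact_mod_cast hk
  have hkc : ((k - 1 : ℕ) : ℂ) = (k : ℂ) - 1 := by
    push_cast [Nat.cast_sub (by omega : 1 ≤ k)]; ring
  have hz1 : 1 < ((k : ℂ) * s).re := by simp; nlinarith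
  have hz2 : 1 < ((k : ℂ) * s - ((k : ℂ) - 1)).re := by simp; nlinarith
  have hsd := summable_divTerm hk hs0
  have hterm : ∀ d : ℕ+, ((d : ℕ) : ℂ) ^ (-s)
        * ∑' i : ℕ, ((i + (d : ℕ) ^ (k - 1) : ℕ) : ℂ) ^ (-s)
      = (1 / 2) * ((d : ℕ) : ℂ) ^ (-((k : ℂ) * s))
        + ((d : ℕ) : ℂ) ^ (-((k : ℂ) * s - ((k : ℂ) - 1))) / (s - 1)
        + s / (Real.pi : ℂ) * ∑' n : ℕ+, divTerm k s d (n * d ^ (k - 1)) := by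
    intro d
    have hdc : ((d : ℕ) : ℂ) ≠ 0 := by exact_mod_cast d.ne_zero
    have hMpos : 0 < (d : ℕ) ^ (k - 1) := pow_pos d.pos _
    have e1 : ((d : ℕ) : ℂ) ^ (-s) * (((d : ℕ) ^ (k - 1) : ℕ) : ℂ) ^ (-s)
        = ((d : ℕ) : ℂ) ^ (-((k : ℂ) * s)) := by
      rw [natCast_pow_cpow, ← Complex.cpow_add _ _ hdc, hkc]
      congr 1; ring
    have e2 : ((d : ℕ) : ℂ) ^ (-s) * (((d : ℕ) ^ (k - 1) : ℕ) : ℂ) ^ (1 - s)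
        = ((d : ℕ) : ℂ) ^ (-((k : ℂ) * s - ((k : ℂ) - 1))) := by
      rw [natCast_pow_cpow, ← Complex.cpow_add _ _ hdc, hkc]
      congr 1; ring
    have e3 : ((d : ℕ) : ℂ) ^ (-s) * ∑' n, remTerm s ((d : ℕ) ^ (k - 1)) n
        = ∑' n : ℕ+, divTerm k s d (n * d ^ (k - 1)) := by
      rw [← tsum_pnat_eq (by simp [remTerm]), ← tsum_mul_left]
      refine tsum_congr fun n => ?_
      have hnc : ((n : ℕ) : ℂ) ≠ 0 := by exact_mod_cast n.ne_zero
      have hM : (((d : ℕ) ^ (k - 1) : ℕ) : ℂ) ≠ 0 := by exact_mod_cast hMpos.ne'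
      have e4 : ((d : ℕ) : ℂ) ^ ((k : ℂ) - 1 - (k : ℂ) * s)
          = ((d : ℕ) : ℂ) ^ (-((k : ℂ) * s)) * (((d : ℕ) ^ (k - 1) : ℕ) : ℂ) := by
        have := natCast_pow_cpow d (k - 1) 1
        rw [Complex.cpow_one] at this
        rw [this, ← Complex.cpow_add _ _ hdc, hkc]
        congr 1; ring
      rw [remTerm, divTerm, e4, ← e1, PNat.mul_coe, PNat.pow_coe, Nat.cast_mul]
      field_simp
    rw [tsum_tail_eq hs hMpos, ← e1, ← e2, ← e3]
    ring
  rw [(tsum_wigertD hk hs).2, tsum_congr hterm, tsum_wigertSineTerm hk hs0, hsd.tsum_prod]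
  have s1 := (summable_pnat_cpow hz1).mul_left (1 / 2 : ℂ)
  have s2 := (summable_pnat_cpow hz2).div_const (s - 1)
  have s3 := hsd.prod.mul_left (s / (Real.pi : ℂ))
  rw [(s1.add s2).tsum_add s3, s1.tsum_add s2, tsum_mul_left, tsum_mul_left, tsum_div_const,
    tsum_pnat_cpow hz1, tsum_pnat_cpow hz2]

lemma differentiableAt_combination {a b c : ℂ → ℂ} {s : ℂ} (ha : DifferentiableAt ℂ a s)
    (hb : DifferentiableAt ℂ b s) (hc : DifferentiableAt ℂ c s) (hs : s ≠ 1) :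
    DifferentiableAt ℂ (fun s => 1 / 2 * a s + b s / (s - 1) + s / (Real.pi : ℂ) * c s) s := by
  have h1 : DifferentiableAt ℂ (fun s => b s / (s - 1)) s :=
    hb.fun_div (by fun_prop) (sub_ne_zero.mpr hs)
  have h2 : DifferentiableAt ℂ (fun s : ℂ => s / (Real.pi : ℂ)) s := by fun_prop
  exact ((ha.const_mul _).fun_add h1).fun_add (h2.fun_mul hc)

theorem wigert_dirichlet_series_sin_representation (k : ℕ) (hk : 2 ≤ k) :
    (∀ s : ℂ, 0 < s.re → s ≠ 1 → s ≠ 1 / (k : ℂ) →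
      Summable (fun n : ℕ+ =>
        ‖sigmaK (k - 1) ((k : ℂ) - 1 - (k : ℂ) * s) n / ((n : ℕ) : ℂ) *
          ∫ x in Set.Ioi (1 : ℝ),
            (Real.sin (2 * Real.pi * (n : ℕ) * x) : ℂ) * (x : ℂ) ^ (-s - 1)‖)) ∧
    AnalyticOnNhd ℂ (fun s : ℂ =>
        (1 / 2) * riemannZeta ((k : ℂ) * s)
          + riemannZeta ((k : ℂ) * s - ((k : ℂ) - 1)) / (s - 1)
          + s / (Real.pi : ℂ) *
            ∑' n : ℕ+, sigmaK (k - 1) ((k : ℂ) - 1 - (k : ℂ) * s) n / ((n : ℕ) : ℂ) *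
              ∫ x in Set.Ioi (1 : ℝ),
                (Real.sin (2 * Real.pi * (n : ℕ) * x) : ℂ) * (x : ℂ) ^ (-s - 1))
      ({s : ℂ | 0 < s.re} \ {1, 1 / (k : ℂ)}) ∧
    ∀ s : ℂ, 1 < s.re →
      (1 / 2) * riemannZeta ((k : ℂ) * s)
          + riemannZeta ((k : ℂ) * s - ((k : ℂ) - 1)) / (s - 1)
          + s / (Real.pi : ℂ) *
            ∑' n : ℕ+, sigmaK (k - 1) ((k : ℂ) - 1 - (k : ℂ) * s) n / ((n : ℕ) : ℂ) *
              ∫ x in Set.Ioi (1 : ℝ),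
                (Real.sin (2 * Real.pi * (n : ℕ) * x) : ℂ) * (x : ℂ) ^ (-s - 1)
        = ∑' j : ℕ+, (wigertD k j : ℂ) * ((j : ℕ) : ℂ) ^ (-s) := by
  have hk0 : (k : ℂ) ≠ 0 := by exact_mod_cast (by omega : k ≠ 0)
  have hterm : ∀ (s : ℂ) (n : ℕ+),
      sigmaK (k - 1) ((k : ℂ) - 1 - (k : ℂ) * s) n / ((n : ℕ) : ℂ) *
        ∫ x in Set.Ioi (1 : ℝ),
          (Real.sin (2 * Real.pi * (n : ℕ) * x) : ℂ) * (x : ℂ) ^ (-s - 1)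
      = wigertSineTerm k s n := fun s n => by rw [wigertSineTerm, sinInt]
  simp only [hterm]
  refine ⟨fun s hs _ _ => summable_norm_wigertSineTerm hk hs, ?_, fun s hs => wigert_identity hk hs⟩
  refine DifferentiableOn.analyticOnNhd ?_ ?_
  · intro s hs
    obtain ⟨hre, hne⟩ := hs
    simp only [mem_insert_iff, mem_singleton_iff, not_or] at hne
    obtain ⟨h1, h2⟩ := hne
    have hopen : IsOpen {s : ℂ | 0 < s.re} := isOpen_lt continuous_const Complex.continuous_re
    have hz1 : (k : ℂ) * s ≠ 1 := fun h => h2 (by rw [eq_div_iff hk0, mul_comm]; exact h)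
    have hz2 : (k : ℂ) * s - ((k : ℂ) - 1) ≠ 1 := fun h =>
      h1 (mul_left_cancel₀ hk0 (by linear_combination h))
    have d1 : DifferentiableAt ℂ (fun s => riemannZeta ((k : ℂ) * s)) s :=
      (differentiableAt_riemannZeta hz1).comp s (by fun_prop)
    have d2 : DifferentiableAt ℂ (fun s => riemannZeta ((k : ℂ) * s - ((k : ℂ) - 1))) s :=
      DifferentiableAt.comp s (f := fun s => (k : ℂ) * s - ((k : ℂ) - 1))
        (differentiableAt_riemannZeta hz2) (by fun_prop)
    have d3 : DifferentiableAt ℂ (fun s => ∑' N, wigertSineTerm k s N) s :=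
      (differentiableOn_tsum_wigertSineTerm hk).differentiableAt (hopen.mem_nhds hre)
    refine DifferentiableAt.differentiableWithinAt ?_
    exact differentiableAt_combination d1 d2 d3 h1
  · exact (isOpen_lt continuous_const Complex.continuous_re).sdiff
      (Set.toFinite {1, 1 / (k : ℂ)}).isClosed
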